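/- Let X be a rearrangement invariant Banach function space on (0,1) or (0,∞) with the Fatou property. Then for every f ∈ X, dist(f, X_a) = dist(f*, X_a), where f* is the non-increasing rearrangement of f and X_a is the ideal of order continuous elements. -/

import Mathlib

open Filter Topology MeasureTheory Set

/-- A **Banach ideal space** on a measure space `(α, μ)`: a collection of (real-valued)
measurable functions with a complete lattice-compatible norm satisfying the ideal property. -/
structure BanachIdealSpace (α : Type*) [MeasurableSpace α] (μ : Measure α) where
  Mem : (α → ℝ) → Prop
  N : (α → ℝ) → ℝ
  mem_zero : Mem 0
  mem_add : ∀ f g, Mem f → Mem g → Mem (f + g)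
  mem_smul : ∀ (c : ℝ) f, Mem f → Mem (c • f)
  measurable : ∀ f, Mem f → AEMeasurable f μ
  N_nonneg : ∀ f, 0 ≤ N f
  N_zero : N 0 = 0
  N_eq_zero : ∀ f, Mem f → N f = 0 → (∀ᵐ x ∂μ, f x = 0)
  N_add : ∀ f g, Mem f → Mem g → N (f + g) ≤ N f + N g
  N_smul : ∀ (c : ℝ) f, N (c • f) = |c| * N f
  ideal : ∀ f g, AEMeasurable f μ → (∀ᵐ x ∂μ, |f x| ≤ |g x|) → Mem g →
    Mem f ∧ N f ≤ N g
  complete : ∀ u : ℕ → (α → ℝ), (∀ n, Mem (u n)) →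
    (∀ ε : ℝ, 0 < ε → ∃ n₀ : ℕ, ∀ m n, n₀ ≤ m → n₀ ≤ n → N (u m - u n) < ε) →
    ∃ f, Mem f ∧ Tendsto (fun n => N (u n - f)) atTop (𝓝 0)

namespace BanachIdealSpace

variable {α : Type*} [MeasurableSpace α] {μ : Measure α}

/-- Distance (w.r.t. a norm functional `N`) from `f` to a set `S` of functions. -/
noncomputable def distIn (N : (α → ℝ) → ℝ) (f : α → ℝ) (S : Set (α → ℝ)) : ℝ :=
  sInf ((fun g => N (f - g)) '' S)

/-- The set of **order continuous elements** of a (generalized) function space given by a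
membership predicate `Mem` and a norm `N`: those `f` such that every sequence `uₙ` with
`0 ≤ uₙ ≤ |f|` a.e., a.e. non-increasing and converging to `0` a.e., satisfies `N (uₙ) → 0`. -/
def ocSet (μ : Measure α) (Mem : (α → ℝ) → Prop) (N : (α → ℝ) → ℝ) : Set (α → ℝ) :=
  {f | Mem f ∧ ∀ u : ℕ → (α → ℝ), (∀ n, Mem (u n)) →
    (∀ n, ∀ᵐ x ∂μ, 0 ≤ u n x ∧ u n x ≤ |f x|) →
    (∀ n, ∀ᵐ x ∂μ, u (n + 1) x ≤ u n x) →
    (∀ᵐ x ∂μ, Tendsto (fun n => u n x) atTop (𝓝 0)) →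
    Tendsto (fun n => N (u n)) atTop (𝓝 0)}

/-- The ideal `X_a` of order continuous elements of a Banach ideal space `X`. -/
def oc (X : BanachIdealSpace α μ) : Set (α → ℝ) := ocSet μ X.Mem X.N

/-- An **order ideal** of a Banach ideal space: a closed solid linear subspace. -/
structure IsOrderIdeal (X : BanachIdealSpace α μ) (J : Set (α → ℝ)) : Prop where
  subset : ∀ f ∈ J, X.Mem f
  zero : (0 : α → ℝ) ∈ J
  add : ∀ f g, f ∈ J → g ∈ J → f + g ∈ J
  smul : ∀ (c : ℝ) f, f ∈ J → c • f ∈ J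
  solid : ∀ f g, f ∈ J → X.Mem g → (∀ᵐ x ∂μ, |g x| ≤ |f x|) → g ∈ J
  closed : ∀ (u : ℕ → (α → ℝ)) f, (∀ n, u n ∈ J) → X.Mem f →
    Tendsto (fun n => X.N (f - u n)) atTop (𝓝 0) → f ∈ J

/-- The **Fatou property** of a Banach ideal space. -/
def Fatou (X : BanachIdealSpace α μ) : Prop :=
  ∀ (u : ℕ → (α → ℝ)) (f : α → ℝ), (∀ n, X.Mem (u n)) → AEMeasurable f μ →
    (∀ᵐ x ∂μ, 0 ≤ u 0 x) → (∀ᵐ x ∂μ, Monotone fun n => u n x) →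
    (∀ᵐ x ∂μ, Tendsto (fun n => u n x) atTop (𝓝 (f x))) →
    BddAbove (Set.range fun n => X.N (u n)) →
    X.Mem f ∧ Tendsto (fun n => X.N (u n)) atTop (𝓝 (X.N f))

/-- The **semi-Fatou property**: if `0 ≤ uₙ ↑ f ∈ X` then `‖uₙ‖ ↑ ‖f‖`. -/
def SemiFatou (X : BanachIdealSpace α μ) : Prop :=
  ∀ (u : ℕ → (α → ℝ)) (f : α → ℝ), (∀ n, X.Mem (u n)) → X.Mem f →
    (∀ᵐ x ∂μ, 0 ≤ u 0 x) → (∀ᵐ x ∂μ, Monotone fun n => u n x) →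
    (∀ᵐ x ∂μ, Tendsto (fun n => u n x) atTop (𝓝 (f x))) →
    Tendsto (fun n => X.N (u n)) atTop (𝓝 (X.N f))

/-- A Banach ideal space is **rearrangement invariant (symmetric)**: equimeasurable
functions belong to the space simultaneously and have equal norms. -/
def Symmetric (X : BanachIdealSpace α μ) : Prop :=
  ∀ f g, AEMeasurable f μ →
    (∀ lam : ℝ, 0 < lam → μ {x | lam < |f x|} = μ {x | lam < |g x|}) →
    X.Mem g → X.Mem f ∧ X.N f = X.N g

/-- The **non-increasing rearrangement** of a function `f` (w.r.t. the measure `μ`). -/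
noncomputable def rear (μ : Measure α) (f : α → ℝ) (t : ℝ) : ℝ :=
  sInf {lam : ℝ | 0 < lam ∧ μ {x | lam < |f x|} ≤ ENNReal.ofReal t}

/-- A (generalized) function space given by `(Mem, N)` contains a **lattice isometric copy
of `ℓ∞`**: there is a linear map from bounded sequences which preserves absolute values
(hence the lattice operations) and is an isometry for the sup norm on bounded sequences. -/
def HasLatticeCopyLinf (Mem : (α → ℝ) → Prop) (N : (α → ℝ) → ℝ) : Prop :=
  ∃ T : (ℕ → ℝ) → (α → ℝ),
    (∀ x y, T (x + y) = T x + T y) ∧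
    (∀ (c : ℝ) x, T (c • x) = c • T x) ∧
    (∀ x, T (fun n => |x n|) = fun t => |T x t|) ∧
    (∀ x : ℕ → ℝ, BddAbove (Set.range fun n => |x n|) →
      Mem (T x) ∧ N (T x) = ⨆ n, |x n|)

end BanachIdealSpace

open BanachIdealSpace

/-!
If `X_a = 0`, both distances are norms of equimeasurable functions. If `X_a ≠ 0`, it contains every
bounded `h ∈ X` supported on a set of finite measure, because the measure has no atoms, and these
`h` are dense in it. For each of them some truncation `w` of `f` satisfies `‖f - w‖ ≤ ‖f - h‖`:
the distribution function of `f - h` is bounded below, and that of `f - w` is given exactly, in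
terms of the distribution function of `f`. So `dist(f, X_a)` is the infimum of `‖f - w‖` over
truncations `w`, and equimeasurable functions have the same infimum.
-/

open scoped ENNReal

namespace BanachIdealSpace

section Truncation

variable {α : Type*} {f : α → ℝ} {l n t : ℝ}

/-- The part of `f` where `|f| > l`, clamped to `[-n, n]`, and `0` elsewhere. -/
noncomputable def truncate (l n : ℝ) (f : α → ℝ) : α → ℝ :=
  {x | l < |f x|}.indicator fun x => max (-n) (min (f x) n)

lemma abs_sub_clamp (hn : 0 ≤ n) (s : ℝ) : |s - max (-n) (min s n)| = max (|s| - n) 0 := by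
  grind

lemma abs_clamp_le (hn : 0 ≤ n) (s : ℝ) : |max (-n) (min s n)| ≤ min |s| n := by
  grind

lemma abs_truncate_le (hn : 0 ≤ n) (x : α) : |truncate l n f x| ≤ min |f x| n :=
  (norm_indicator_le_norm_self (fun x => max (-n) (min (f x) n)) x).trans (abs_clamp_le hn (f x))

lemma support_truncate_subset : Function.support (truncate l n f) ⊆ {x | l < |f x|} :=
  support_indicator_subset

lemma setOf_lt_abs_sub_truncate (hn : 0 ≤ n) (ht : 0 < t) :
    {x | t < |(f - truncate l n f) x|} =
      {x | n + t < |f x| ∧ l < |f x|} ∪ ({x | t < |f x|} \ {x | l < |f x|}) := by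
  ext x
  by_cases hx : l < |f x|
  · simp [truncate, hx, abs_sub_clamp hn, lt_sub_iff_add_lt', ht.not_gt]
  · simp [truncate, hx]

end Truncation

lemma distIn_le_of_mem {α : Type*} {f g : α → ℝ} {N : (α → ℝ) → ℝ} (hN : ∀ f, 0 ≤ N f)
    {S : Set (α → ℝ)} (hg : g ∈ S) : distIn N f S ≤ N (f - g) :=
  csInf_le ⟨0, forall_mem_image.2 fun _ _ => hN _⟩ ⟨g, hg, rfl⟩

variable {α β : Type*} [MeasurableSpace α] [MeasurableSpace β] {μ : Measure α} {ν : Measure β}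

section Norm

variable {X : BanachIdealSpace α μ} {f g h : α → ℝ}

lemma mem_sub (hf : X.Mem f) (hg : X.Mem g) : X.Mem (f - g) := by
  simpa [sub_eq_add_neg] using X.mem_add _ _ hf (X.mem_smul (-1) g hg)

lemma N_sub_le (hf : X.Mem f) (hg : X.Mem g) (hh : X.Mem h) :
    X.N (f - h) ≤ X.N (f - g) + X.N (g - h) := by
  simpa using X.N_add _ _ (mem_sub hf hg) (mem_sub hg hh)

lemma N_congr_abs (hf : AEMeasurable f μ) (hg : X.Mem g) (h : ∀ᵐ x ∂μ, |f x| = |g x|) :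
    X.N f = X.N g := by
  obtain ⟨hf', hle⟩ := X.ideal f g hf (h.mono fun _ hx => hx.le) hg
  exact hle.antisymm (X.ideal g f (X.measurable g hg) (h.mono fun _ hx => hx.ge) hf').2

lemma mem_indicator {s : Set α} (hs : NullMeasurableSet s μ) (hg : X.Mem g) :
    X.Mem (s.indicator g) :=
  (X.ideal _ g ((X.measurable g hg).indicator₀ hs)
    (.of_forall fun x => norm_indicator_le_norm_self g x) hg).1

lemma N_le_add_of_abs_le_or (hf : X.Mem f) (hg : X.Mem g) (hh : X.Mem h)
    (hle : ∀ᵐ x ∂μ, |f x| ≤ |g x| ∨ |f x| ≤ |h x|) : X.N f ≤ X.N g + X.N h := by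
  set s := {x | |f x| ≤ |g x|}
  have hf' := X.measurable f hf
  have hs : NullMeasurableSet s μ := nullMeasurableSet_le hf'.norm (X.measurable g hg).norm
  have hsg : X.N (s.indicator f) ≤ X.N g := by
    refine (X.ideal _ g (hf'.indicator₀ hs) (.of_forall fun x => ?_) hg).2
    by_cases hx : x ∈ s
    · rwa [indicator_of_mem hx]
    · simp [hx]
  have hsh : X.N (sᶜ.indicator f) ≤ X.N h := by
    refine (X.ideal _ h (hf'.indicator₀ hs.compl) (hle.mono fun x hx => ?_) hh).2
    by_cases hxs : x ∈ s
    · simp [hxs]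
    · simpa [hxs] using hx.resolve_left hxs
  calc X.N f = X.N (s.indicator f + sᶜ.indicator f) := by rw [indicator_self_add_compl]
    _ ≤ X.N (s.indicator f) + X.N (sᶜ.indicator f) :=
      X.N_add _ _ (mem_indicator hs hf) (mem_indicator hs.compl hf)
    _ ≤ X.N g + X.N h := add_le_add hsg hsh

lemma zero_mem_oc (X : BanachIdealSpace α μ) : (0 : α → ℝ) ∈ X.oc := by
  refine ⟨X.mem_zero, fun u hu hu0 _ _ => ?_⟩
  have hNu : ∀ n, X.N (u n) = 0 := fun n => by
    rw [← X.N_zero]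
    refine N_congr_abs (X.measurable _ (hu n)) X.mem_zero ?_
    filter_upwards [hu0 n] with x hx
    rw [abs_of_nonneg hx.1]
    exact le_antisymm hx.2 (by simpa using hx.1)
  simp [hNu]

lemma tendsto_N_indicator_of_mem_oc (hg : g ∈ X.oc) {s : ℕ → Set α}
    (hs : ∀ n, NullMeasurableSet (s n) μ) (hanti : Antitone s)
    (hlim : ∀ᵐ x ∂μ, ∀ᶠ n in atTop, x ∉ s n) :
    Tendsto (fun n => X.N ((s n).indicator g)) atTop (𝓝 0) := by
  have hmem n : X.Mem ((s n).indicator g) := mem_indicator (hs n) hg.1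
  have hmeas n : AEMeasurable (fun x => |(s n).indicator g x|) μ :=
    (X.measurable _ (hmem n)).norm
  have habs n : X.N (fun x => |(s n).indicator g x|) = X.N ((s n).indicator g) :=
    N_congr_abs (hmeas n) (hmem n) (.of_forall fun x => abs_abs _)
  simp only [← habs]
  refine hg.2 _ (fun n => ?_) (fun n => .of_forall fun x => ?_) (fun n => .of_forall fun x => ?_) ?_
  · exact (X.ideal _ _ (hmeas n) (.of_forall fun x => (abs_abs _).le) (hmem n)).1
  · exact ⟨abs_nonneg _, norm_indicator_le_norm_self g x⟩
  · exact norm_indicator_le_of_subset (hanti n.le_succ) g x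
  · filter_upwards [hlim] with x hx
    refine tendsto_const_nhds.congr' (hx.mono fun n hn => ?_)
    simp [hn]

lemma distIn_oc_of_forall_ae_eq_zero (hf : X.Mem f) (h0 : ∀ g ∈ X.oc, g =ᵐ[μ] 0) :
    distIn X.N f X.oc = X.N f := by
  have hN : ∀ g ∈ X.oc, X.N (f - g) = X.N f := fun g hg =>
    N_congr_abs (X.measurable _ (mem_sub hf hg.1)) hf <| by
      filter_upwards [h0 g hg] with x hx
      simp [hx]
  have hne : X.oc.Nonempty := ⟨0, zero_mem_oc X⟩
  rw [distIn, image_congr hN, hne.image_const, csInf_singleton]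

end Norm

section Distribution

/-- The **distribution function** `t ↦ μ {|f| > t}` of `f`. -/
def distribFun (μ : Measure α) (f : α → ℝ) (t : ℝ) : ℝ≥0∞ := μ {x | t < |f x|}

/-- Two functions, possibly on different measure spaces, are **equimeasurable** if their
distribution functions agree at all positive levels. -/
def Equimeasurable (f : α → ℝ) (g : β → ℝ) (μ : Measure α) (ν : Measure β) : Prop :=
  ∀ t, 0 < t → distribFun μ f t = distribFun ν g t

variable {f : α → ℝ} {g : β → ℝ}

lemma Equimeasurable.symm (h : Equimeasurable f g μ ν) : Equimeasurable g f ν μ :=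
  fun t ht => (h t ht).symm

lemma distribFun_antitone (μ : Measure α) (f : α → ℝ) : Antitone (distribFun μ f) :=
  fun _ _ hst => measure_mono fun _ hx => hst.trans_lt hx

lemma nullMeasurableSet_lt_abs (hf : AEMeasurable f μ) (t : ℝ) :
    NullMeasurableSet {x | t < |f x|} μ :=
  nullMeasurableSet_lt aemeasurable_const hf.norm

lemma exists_gt_lt_distribFun {c : ℝ≥0∞} {t : ℝ} (h : c < distribFun μ f t) :
    ∃ s, t < s ∧ c < distribFun μ f s := by
  obtain ⟨u, hu_anti, htu, hu_lim⟩ := exists_seq_strictAnti_tendsto t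
  have hunion : {x | t < |f x|} = ⋃ n, {x | u n < |f x|} := by
    ext x
    simp only [mem_iUnion, mem_ofPred_eq]
    exact ⟨fun hx => (hu_lim.eventually_lt_const hx).exists, fun ⟨n, hn⟩ => (htu n).trans hn⟩
  have hmono : Monotone fun n => {x | u n < |f x|} :=
    fun _ _ hmn _ hx => (hu_anti.antitone hmn).trans_lt hx
  rw [distribFun, hunion, hmono.measure_iUnion, lt_iSup_iff] at h
  obtain ⟨n, hn⟩ := h
  exact ⟨u n, htu n, hn⟩

lemma Equimeasurable.distribFun_le (h : Equimeasurable f g μ ν) {t : ℝ} (ht : 0 ≤ t) :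
    distribFun μ f t ≤ distribFun ν g t := by
  refine le_of_forall_lt fun c hc => ?_
  obtain ⟨s, hts, hs⟩ := exists_gt_lt_distribFun hc
  rw [h s (ht.trans_lt hts)] at hs
  exact hs.trans_le (distribFun_antitone ν g hts.le)

lemma Equimeasurable.distribFun_eq (h : Equimeasurable f g μ ν) {t : ℝ} (ht : 0 ≤ t) :
    distribFun μ f t = distribFun ν g t :=
  (h.distribFun_le ht).antisymm (h.symm.distribFun_le ht)

lemma tendsto_distribFun_atTop (hf : AEMeasurable f μ) (hfin : ∃ t, distribFun μ f t ≠ ∞) :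
    Tendsto (distribFun μ f) atTop (𝓝 0) := by
  have hinter : ⋂ t : ℝ, {x | t < |f x|} = ∅ :=
    eq_empty_of_forall_notMem fun x hx => by simpa using mem_iInter.1 hx |f x|
  have hlim := tendsto_measure_iInter_atTop (nullMeasurableSet_lt_abs hf)
    (fun _ _ hst _ hx => hst.trans_lt hx) hfin
  rwa [hinter, measure_empty] at hlim

lemma distribFun_indicator_one (s : Set α) {t : ℝ} (ht : 0 < t) :
    distribFun μ (s.indicator fun _ => 1) t = if t < 1 then μ s else 0 := by
  have hset : {x | t < |s.indicator (fun _ => (1 : ℝ)) x|} = if t < 1 then s else ∅ := by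
    ext x
    by_cases hx : x ∈ s <;> by_cases ht1 : t < 1 <;> simp [hx, ht1, ht.le]
  rw [distribFun, hset]
  split_ifs <;> simp

end Distribution

section Rearrangement

/-- The interval `(0, a)` for `a ∈ [0, ∞]`; both `(0, 1)` and `(0, ∞)` are of this form. -/
def initialInterval (a : ℝ≥0∞) : Set ℝ := {x | 0 < x ∧ ENNReal.ofReal x < a}

lemma initialInterval_one : initialInterval 1 = Ioo 0 1 := by
  ext x
  simp [initialInterval]

lemma initialInterval_top : initialInterval ∞ = Ioi 0 := by
  ext x
  simp [initialInterval]

lemma initialInterval_eq_Ioo {a : ℝ≥0∞} (ha : a ≠ ∞) : initialInterval a = Ioo 0 a.toReal := by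
  ext x
  simp only [initialInterval, mem_ofPred_eq, mem_Ioo]
  exact and_congr_right fun hx => ENNReal.ofReal_lt_iff_lt_toReal hx.le ha

lemma initialInterval_inter (a b : ℝ≥0∞) :
    initialInterval a ∩ initialInterval b = initialInterval (min a b) := by
  ext x
  simp only [initialInterval, mem_inter_iff, mem_ofPred_eq, lt_min_iff]
  tauto

lemma measurableSet_initialInterval (a : ℝ≥0∞) : MeasurableSet (initialInterval a) :=
  measurableSet_Ioi.inter (measurableSet_lt ENNReal.measurable_ofReal measurable_const)

lemma volume_initialInterval (a : ℝ≥0∞) : volume (initialInterval a) = a := by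
  rcases eq_or_ne a ∞ with rfl | ha
  · rw [initialInterval_top, Real.volume_Ioi]
  · rw [initialInterval_eq_Ioo ha, Real.volume_Ioo, sub_zero, ENNReal.ofReal_toReal ha]

lemma volume_restrict_initialInterval_univ (a : ℝ≥0∞) :
    volume.restrict (initialInterval a) univ = a := by
  rw [Measure.restrict_apply_univ, volume_initialInterval]

variable {f : α → ℝ} {g : β → ℝ} {s t : ℝ}

lemma rear_nonneg (μ : Measure α) (f : α → ℝ) (t : ℝ) : 0 ≤ rear μ f t :=
  Real.sInf_nonneg fun _ hx => hx.1.le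

lemma exists_distribFun_le_ofReal (hf : AEMeasurable f μ) (hfin : ∃ t, distribFun μ f t ≠ ∞)
    (ht : 0 < t) : {l | 0 < l ∧ distribFun μ f l ≤ ENNReal.ofReal t}.Nonempty :=
  ((eventually_gt_atTop 0).and <| (tendsto_distribFun_atTop hf hfin).eventually_le_const
    (ENNReal.ofReal_pos.2 ht)).exists

lemma rear_le_rear (hf : AEMeasurable f μ) (hfin : ∃ t, distribFun μ f t ≠ ∞) (ht : 0 < t)
    (h : ∀ l, 0 < l → distribFun μ f l ≤ ENNReal.ofReal t →
      distribFun ν g l ≤ ENNReal.ofReal s) : rear ν g s ≤ rear μ f t :=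
  csInf_le_csInf ⟨0, fun _ hl => hl.1.le⟩ (exists_distribFun_le_ofReal hf hfin ht)
    fun l hl => ⟨hl.1, h l hl.1 hl.2⟩

lemma lt_rear_iff (hf : AEMeasurable f μ) (hfin : ∃ t, distribFun μ f t ≠ ∞) (ht : 0 < t)
    (hs : 0 < s) : s < rear μ f t ↔ ENNReal.ofReal t < distribFun μ f s := by
  refine ⟨fun h => ?_, fun h => ?_⟩
  · by_contra! hle
    exact h.not_ge (csInf_le ⟨0, fun _ hl => hl.1.le⟩ ⟨hs, hle⟩)
  · obtain ⟨r, hsr, hr⟩ := exists_gt_lt_distribFun h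
    refine hsr.trans_le (le_csInf (exists_distribFun_le_ofReal hf hfin ht) fun l hl => ?_)
    by_contra! hlr
    exact hr.not_ge ((distribFun_antitone μ f hlr.le).trans hl.2)

lemma aemeasurable_rear (hf : AEMeasurable f μ) (hfin : ∃ t, distribFun μ f t ≠ ∞) (a : ℝ≥0∞) :
    AEMeasurable (rear μ f) (volume.restrict (initialInterval a)) :=
  aemeasurable_restrict_of_antitoneOn (measurableSet_initialInterval a) fun _ hs _ _ hst =>
    rear_le_rear hf hfin hs.1 fun _ _ hle => hle.trans (ENNReal.ofReal_le_ofReal hst)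

lemma equimeasurable_rear (hf : AEMeasurable f μ) (hfin : ∃ t, distribFun μ f t ≠ ∞)
    {a : ℝ≥0∞} (ha : μ univ ≤ a) :
    Equimeasurable (rear μ f) f (volume.restrict (initialInterval a)) μ := by
  intro t ht
  have hlevel : {x | t < |rear μ f x|} ∩ initialInterval a =
      initialInterval (min (distribFun μ f t) a) := by
    rw [← initialInterval_inter]
    ext x
    refine and_congr_left fun hx => ?_
    rw [mem_ofPred_eq, abs_of_nonneg (rear_nonneg μ f x), lt_rear_iff hf hfin hx.1 ht]
    exact (and_iff_right hx.1).symm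
  rw [distribFun, Measure.restrict_apply' (measurableSet_initialInterval a), hlevel,
    volume_initialInterval]
  exact min_eq_left ((measure_mono (subset_univ _)).trans ha)

end Rearrangement

section DistribMonotone

/-- Membership and norm are **monotone in the distribution function**. This strengthens
rearrangement invariance to one-sided comparisons; over `(0, a)` the two are equivalent. -/
def DistribMonotone (X : BanachIdealSpace α μ) : Prop :=
  ∀ f g, AEMeasurable f μ → X.Mem g →
    (∀ t, 0 < t → distribFun μ f t ≤ distribFun μ g t) → X.Mem f ∧ X.N f ≤ X.N g

lemma DistribMonotone.symmetric {X : BanachIdealSpace α μ} (hX : X.DistribMonotone) :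
    X.Symmetric := by
  intro f g hf hfg hg
  obtain ⟨hf', hle⟩ := hX f g hf hg fun t ht => (hfg t ht).le
  exact ⟨hf', hle.antisymm (hX g f (X.measurable g hg) hf' fun t ht => (hfg t ht).ge).2⟩

-- If `d_f = ∞` everywhere then `2f` and `f` are equimeasurable, so `2‖f‖ = ‖f‖` and `f = 0`.
lemma Symmetric.exists_distribFun_ne_top {X : BanachIdealSpace α μ} (hX : X.Symmetric)
    {f : α → ℝ} (hf : X.Mem f) : ∃ t, distribFun μ f t ≠ ∞ := by
  by_contra! htop
  have htwo (t : ℝ) : {x | t < |((2 : ℝ) • f) x|} = {x | t / 2 < |f x|} := by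
    ext x
    simp [abs_mul, div_lt_iff₀']
  have hN : X.N ((2 : ℝ) • f) = X.N f := by
    refine (hX _ f (X.measurable _ (X.mem_smul 2 f hf)) (fun t _ => ?_) hf).2
    rw [htwo]
    exact (htop _).trans (htop t).symm
  rw [X.N_smul, abs_two] at hN
  have hf0 : ∀ᵐ x ∂μ, ¬ 0 < |f x| :=
    (X.N_eq_zero f hf (by linarith)).mono fun x hx => by simp [hx]
  have hzero : distribFun μ f 0 = 0 := by simpa [ae_iff, distribFun] using hf0
  exact ENNReal.top_ne_zero ((htop 0).symm.trans hzero)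

lemma Symmetric.distribMonotone {a : ℝ≥0∞}
    {X : BanachIdealSpace ℝ (volume.restrict (initialInterval a))} (hX : X.Symmetric) :
    X.DistribMonotone := by
  intro f g hf hg hfg
  have huniv := (volume_restrict_initialInterval_univ a).le
  have hgm := X.measurable g hg
  have hgfin := hX.exists_distribFun_ne_top hg
  have hffin : ∃ t, distribFun (volume.restrict (initialInterval a)) f t ≠ ∞ := by
    obtain ⟨t, ht, hgt⟩ := exists_distribFun_le_ofReal hgm hgfin one_pos
    exact ⟨t, ((hfg t ht).trans hgt).trans_lt ENNReal.ofReal_lt_top |>.ne⟩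
  obtain ⟨hg', hNg⟩ := hX (rear _ g) g (aemeasurable_rear hgm hgfin a)
    (equimeasurable_rear hgm hgfin huniv) hg
  obtain ⟨hf', hNf⟩ := X.ideal (rear _ f) (rear _ g) (aemeasurable_rear hf hffin a) (by
    filter_upwards [ae_restrict_mem (measurableSet_initialInterval a)] with x hx
    rw [abs_of_nonneg (rear_nonneg _ f x), abs_of_nonneg (rear_nonneg _ g x)]
    exact rear_le_rear hgm hgfin hx.1 fun l hl hle => (hfg l hl).trans hle) hg'
  obtain ⟨hf'', hN⟩ := hX f (rear _ f) hf (equimeasurable_rear hf hffin huniv).symm hf'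
  exact ⟨hf'', hN.trans_le (hNf.trans_eq hNg)⟩

lemma DistribMonotone.indicator_one {X : BanachIdealSpace α μ} (hX : X.DistribMonotone)
    {s t : Set α} (hs : NullMeasurableSet s μ) (hst : μ s ≤ μ t)
    (ht : X.Mem (t.indicator fun _ => 1)) :
    X.Mem (s.indicator fun _ => 1) ∧
      X.N (s.indicator fun _ => 1) ≤ X.N (t.indicator fun _ => 1) := by
  refine hX _ _ (aemeasurable_const.indicator₀ hs) ht fun r hr => ?_
  rw [distribFun_indicator_one s hr, distribFun_indicator_one t hr]
  split_ifs
  exacts [hst, le_rfl]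

end DistribMonotone

section Truncations

/-- The admissible truncations of `f`: those above a level `l` with `μ {|f| > l} < ∞`, which are
bounded functions with support of finite measure. -/
def truncations (μ : Measure α) (f : α → ℝ) : Set (α → ℝ) :=
  {w | ∃ l n, 0 ≤ l ∧ l ≤ n ∧ distribFun μ f l ≠ ∞ ∧ w = truncate l n f}

variable {f g : α → ℝ} {l n t : ℝ}

lemma aemeasurable_truncate (hf : AEMeasurable f μ) : AEMeasurable (truncate l n f) μ :=
  (aemeasurable_const.max (hf.min aemeasurable_const)).indicator₀ (nullMeasurableSet_lt_abs hf l)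

lemma mem_truncate {X : BanachIdealSpace α μ} (hf : X.Mem f) (hn : 0 ≤ n) :
    X.Mem (truncate l n f) :=
  (X.ideal _ f (aemeasurable_truncate (X.measurable f hf))
    (.of_forall fun x => (abs_truncate_le hn x).trans (min_le_left _ _)) hf).1

lemma distribFun_sub_truncate (hf : AEMeasurable f μ) (hn : 0 ≤ n) (hln : l ≤ n)
    (hl : distribFun μ f l ≠ ∞) (ht : 0 < t) :
    distribFun μ (f - truncate l n f) t =
      distribFun μ f (n + t) + (distribFun μ f t - distribFun μ f l) := by
  have hhigh : {x | n + t < |f x| ∧ l < |f x|} = {x | n + t < |f x|} :=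
    ext fun x => and_iff_left_of_imp fun hx => by linarith [show n + t < |f x| from hx]
  have hdisj : Disjoint {x | n + t < |f x|} ({x | t < |f x|} \ {x | l < |f x|}) :=
    disjoint_left.2 fun x hx hx' => hx'.2 (by grind)
  have hdiff : μ ({x | t < |f x|} \ {x | l < |f x|}) = distribFun μ f t - distribFun μ f l := by
    rcases le_total t l with htl | hlt
    · exact measure_sdiff (fun x hx => htl.trans_lt hx) (nullMeasurableSet_lt_abs hf l) hl
    · have hsub : {x | t < |f x|} ⊆ {x | l < |f x|} := fun x hx => hlt.trans_lt hx
      rw [sdiff_eq_empty.2 hsub, measure_empty, tsub_eq_zero_of_le (distribFun_antitone μ f hlt)]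
  rw [distribFun, setOf_lt_abs_sub_truncate hn ht, hhigh,
    measure_union₀' (nullMeasurableSet_lt_abs hf _) hdisj.aedisjoint, hdiff]
  rfl

lemma Equimeasurable.sub_truncate {g : β → ℝ} (h : Equimeasurable f g μ ν)
    (hf : AEMeasurable f μ) (hg : AEMeasurable g ν) (hl0 : 0 ≤ l) (hln : l ≤ n)
    (hl : distribFun μ f l ≠ ∞) :
    Equimeasurable (f - truncate l n f) (g - truncate l n g) μ ν := by
  intro t ht
  have hn := hl0.trans hln
  rw [distribFun_sub_truncate hf hn hln hl ht,
    distribFun_sub_truncate hg hn hln (h.distribFun_eq hl0 ▸ hl) ht, h.distribFun_eq hl0,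
    h t ht, h (n + t) (by positivity)]

lemma le_distribFun_sub (hf : AEMeasurable f μ) (hgn : ∀ x, |g x| ≤ n) :
    distribFun μ f (n + t) +
        (distribFun μ f t - (distribFun μ f (n + t) + μ (Function.support g))) ≤
      distribFun μ (f - g) t := by
  set high : Set α := {x | n + t < |f x|} with hhigh
  set low : Set α := ({x | t < |f x|} \ high) \ Function.support g
  have hdisj : Disjoint high low := disjoint_left.2 fun x hx hx' => hx'.1.2 hx
  have hsub : high ∪ low ⊆ {x | t < |(f - g) x|} := by
    rintro x (hx | ⟨⟨hx, -⟩, hgx⟩)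
    · have := abs_sub_abs_le_abs_sub (f x) (g x)
      have := hgn x
      simp only [hhigh, mem_ofPred_eq, Pi.sub_apply] at hx ⊢
      linarith
    · simpa [Function.notMem_support.1 hgx] using hx
  calc distribFun μ f (n + t) +
        (distribFun μ f t - (distribFun μ f (n + t) + μ (Function.support g)))
      ≤ μ high + μ low := by
        rw [← tsub_tsub]
        exact add_le_add_right
          ((tsub_le_tsub_right le_measure_sdiff _).trans le_measure_sdiff) _
    _ = μ (high ∪ low) :=
        (measure_union₀' (nullMeasurableSet_lt_abs hf _) hdisj.aedisjoint).symm
    _ ≤ distribFun μ (f - g) t := measure_mono hsub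

-- If `c` is the infimum of the levels `l` with `d_f(l) < ∞`, then either `l = c` works, or
-- `d_f(c) = ∞` and by right-continuity `T ≤ d_f(l) < ∞` for some `l` slightly above `c`.
lemma exists_level_tsub_distribFun_le (hn : 0 ≤ n) (hfin : distribFun μ f n ≠ ∞) {T : ℝ≥0∞}
    (hT : T ≠ ∞) : ∃ l, 0 ≤ l ∧ l ≤ n ∧ distribFun μ f l ≠ ∞ ∧
      ∀ t, 0 < t → distribFun μ f t - distribFun μ f l ≤ distribFun μ f t - T := by
  set S : Set ℝ := {l | 0 ≤ l ∧ distribFun μ f l ≠ ∞}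
  have hbdd : BddBelow S := ⟨0, fun _ hl => hl.1⟩
  have hnS : n ∈ S := ⟨hn, hfin⟩
  have hc0 : 0 ≤ sInf S := le_csInf ⟨n, hnS⟩ fun _ hl => hl.1
  have hcn : sInf S ≤ n := csInf_le hbdd hnS
  by_cases hc : distribFun μ f (sInf S) = ∞
  · obtain ⟨r, hcr, hTr⟩ := exists_gt_lt_distribFun (hc.symm ▸ hT.lt_top)
    obtain ⟨l, hlS, hlr⟩ := exists_lt_of_csInf_lt ⟨n, hnS⟩ (lt_min hcr (hcn.lt_of_ne
      fun h => hfin (h ▸ hc)))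
    have hTl : T ≤ distribFun μ f l :=
      hTr.le.trans (distribFun_antitone μ f (hlr.le.trans (min_le_left _ _)))
    exact ⟨l, hlS.1, hlr.le.trans (min_le_right _ _), hlS.2, fun t _ => tsub_le_tsub_left hTl _⟩
  · refine ⟨sInf S, hc0, hcn, hc, fun t ht => ?_⟩
    rcases lt_or_ge t (sInf S) with htc | hct
    · have htop : distribFun μ f t = ∞ := by
        by_contra hne
        exact htc.not_ge (csInf_le hbdd ⟨ht.le, hne⟩)
      simp [htop, ENNReal.top_sub hT]
    · simp [tsub_eq_zero_of_le (distribFun_antitone μ f hct)]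

lemma DistribMonotone.exists_truncation_N_sub_le {X : BanachIdealSpace α μ}
    (hX : X.DistribMonotone) (hf : X.Mem f) (hg : X.Mem g) {m : ℝ} (hgm : ∀ x, |g x| ≤ m)
    (hsupp : μ (Function.support g) ≠ ∞) : ∃ w ∈ truncations μ f, X.N (f - w) ≤ X.N (f - g) := by
  have hf' := X.measurable f hf
  obtain ⟨L, hL⟩ := hX.symmetric.exists_distribFun_ne_top hf
  set n := max (max m L) 0
  have hmn : m ≤ n := (le_max_left _ _).trans (le_max_left _ _)
  have hLn : L ≤ n := (le_max_right _ _).trans (le_max_left _ _)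
  have hn : 0 ≤ n := le_max_right _ _
  have hfin : distribFun μ f n ≠ ∞ := ne_top_of_le_ne_top hL (distribFun_antitone μ f hLn)
  obtain ⟨l, hl0, hln, hl, hle⟩ := exists_level_tsub_distribFun_le hn hfin
    (ENNReal.add_ne_top.2 ⟨hfin, hsupp⟩)
  refine ⟨truncate l n f, ⟨l, n, hl0, hln, hl, rfl⟩, (hX _ _ ?_ (mem_sub hf hg) fun t ht => ?_).2⟩
  · exact hf'.sub (aemeasurable_truncate hf')
  calc distribFun μ (f - truncate l n f) t
      = distribFun μ f (n + t) + (distribFun μ f t - distribFun μ f l) :=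
        distribFun_sub_truncate hf' hn hln hl ht
    _ ≤ distribFun μ f (n + t) +
        (distribFun μ f t - (distribFun μ f (n + t) + μ (Function.support g))) := by
        have hnt := distribFun_antitone μ f (le_add_of_nonneg_right (a := n) ht.le)
        exact add_le_add_right ((hle t ht).trans (tsub_le_tsub_left (by gcongr) _)) _
    _ ≤ distribFun μ (f - g) t := le_distribFun_sub hf' fun x => (hgm x).trans hmn

end Truncations

section OrderContinuous

variable {X : BanachIdealSpace α μ} {f g w : α → ℝ}

lemma tendsto_measure_zero_of_ae_eventually_notMem {s : ℕ → Set α} {t : Set α}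
    (hs : ∀ n, NullMeasurableSet (s n) μ) (hst : ∀ n, s n ≤ᵐ[μ] t) (ht : μ t ≠ ∞)
    (hlim : ∀ᵐ x ∂μ, ∀ᶠ n in atTop, x ∉ s n) : Tendsto (fun n => μ (s n)) atTop (𝓝 0) := by
  simp only [← lintegral_indicator_one₀ (hs _)]
  rw [← lintegral_zero (μ := μ)]
  refine tendsto_lintegral_of_dominated_convergence' ((toMeasurable μ t).indicator 1)
    (fun n => aemeasurable_const.indicator₀ (hs n)) (fun n => ?_) ?_ ?_
  · filter_upwards [hst n] with x hx
    by_cases hxs : x ∈ s n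
    · simp [hxs, subset_toMeasurable μ t (hx hxs)]
    · simp [hxs]
  · rwa [lintegral_indicator_one (measurableSet_toMeasurable μ t), measure_toMeasurable]
  · filter_upwards [hlim] with x hx
    refine tendsto_const_nhds.congr' (hx.mono fun n hn => ?_)
    simp [hn]

lemma exists_bounded_N_sub_lt_of_mem_oc [SigmaFinite μ] (hg : g ∈ X.oc) {ε : ℝ} (hε : 0 < ε) :
    ∃ h m, X.Mem h ∧ (∀ x, |h x| ≤ m) ∧ μ (Function.support h) ≠ ∞ ∧ X.N (g - h) < ε := by
  set s : ℕ → Set α := fun n => {x | |g x| ≤ n} ∩ spanningSets μ n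
  have hs n : NullMeasurableSet (s n) μ :=
    (nullMeasurableSet_le (X.measurable g hg.1).norm aemeasurable_const).inter
      (measurableSet_spanningSets μ n).nullMeasurableSet
  have hmono : Monotone s := fun m n hmn => inter_subset_inter
    (fun x (hx : |g x| ≤ m) => hx.trans (Nat.cast_le.2 hmn)) (monotone_spanningSets μ hmn)
  have hlim x : ∀ᶠ n in atTop, x ∉ (s n)ᶜ := by
    filter_upwards [eventually_ge_atTop ⌈|g x|⌉₊, eventually_ge_atTop (spanningSetsIndex μ x)]
      with n hgn hn
    exact not_not.2 ⟨Nat.ceil_le.1 hgn, mem_spanningSets_of_index_le μ x hn⟩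
  obtain ⟨n, hn⟩ := ((tendsto_N_indicator_of_mem_oc hg (fun n => (hs n).compl)
    (fun _ _ hmn => compl_subset_compl.2 (hmono hmn)) (.of_forall hlim)).eventually_lt_const
    hε).exists
  refine ⟨(s n).indicator g, n, mem_indicator (hs n) hg.1, fun x => ?_, ?_, ?_⟩
  · by_cases hx : x ∈ s n
    · simpa [hx] using hx.1
    · simp [hx]
  · exact measure_ne_top_of_subset (support_indicator_subset.trans inter_subset_right)
      (measure_spanningSets_lt_top μ n).ne
  · rwa [← indicator_compl]

variable [TopologicalSpace α] [SecondCountableTopology α] [T1Space α] [OpensMeasurableSpace α]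
  [NullSingletonClass μ]

lemma exists_antitone_inter_measure_pos {s : Set α} (hs : μ s ≠ 0) :
    ∃ U : ℕ → Set α, Antitone U ∧ (∀ n, MeasurableSet (U n)) ∧ (∀ n, 0 < μ (s ∩ U n)) ∧
      ∀ᵐ x ∂μ, ∀ᶠ n in atTop, x ∉ U n := by
  obtain ⟨x₀, -, hx₀⟩ := exists_mem_forall_mem_nhdsWithin_pos_measure hs
  obtain ⟨U, hU, hUbasis⟩ := (nhds_basis_opens x₀).exists_antitone_subbasis
  refine ⟨U, hUbasis.antitone, fun n => (hU n).2.measurableSet, fun n => hx₀ _ ?_, ?_⟩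
  · exact inter_mem_nhdsWithin s ((hU n).2.mem_nhds (hU n).1)
  · filter_upwards [compl_mem_ae_iff.2 (measure_singleton x₀)] with x hx
    filter_upwards [hUbasis.eventually_subset (isOpen_compl_singleton.mem_nhds (Ne.symm hx))]
      with n hn hxU using hn hxU rfl

lemma exists_N_indicator_one_lt (hg : g ∈ X.oc) (hg0 : ¬ g =ᵐ[μ] 0) {ε : ℝ} (hε : 0 < ε) :
    ∃ s : Set α, 0 < μ s ∧ X.Mem (s.indicator fun _ => 1) ∧ X.N (s.indicator fun _ => 1) < ε := by
  have hpos : 0 < distribFun μ g 0 := by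
    rw [pos_iff_ne_zero]
    exact fun h => hg0 <| by simpa [distribFun, Filter.EventuallyEq, ae_iff] using h
  obtain ⟨δ, hδ, hgδ⟩ := exists_gt_lt_distribFun hpos
  obtain ⟨U, hU_anti, hU_meas, hU_pos, hU_lim⟩ := exists_antitone_inter_measure_pos hgδ.ne'
  set s : ℕ → Set α := fun n => {x | δ < |g x|} ∩ U n
  have hs n : NullMeasurableSet (s n) μ :=
    (nullMeasurableSet_lt_abs (X.measurable g hg.1) δ).inter (hU_meas n).nullMeasurableSet
  have hanti : Antitone s := fun m n hmn => inter_subset_inter_right _ (hU_anti hmn)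
  have hlim : ∀ᵐ x ∂μ, ∀ᶠ n in atTop, x ∉ s n :=
    hU_lim.mono fun x hx => hx.mono fun n hn hxs => hn hxs.2
  obtain ⟨n, hn⟩ := ((tendsto_N_indicator_of_mem_oc hg hs hanti hlim).eventually_lt_const
    (mul_pos hδ hε)).exists
  have hone : ∀ x, |(s n).indicator (fun _ => (1 : ℝ)) x| ≤ |(δ⁻¹ • (s n).indicator g) x| := by
    intro x
    by_cases hx : x ∈ s n
    · have hgx : δ ≤ |g x| := hx.1.le
      simpa [hx, abs_mul, abs_of_pos hδ, le_inv_mul_iff₀ hδ] using hgx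
    · simp [hx]
  obtain ⟨hmem, hle⟩ := X.ideal _ _ (aemeasurable_const.indicator₀ (hs n)) (.of_forall hone)
    (X.mem_smul _ _ (mem_indicator (hs n) hg.1))
  refine ⟨s n, hU_pos n, hmem, hle.trans_lt ?_⟩
  rwa [X.N_smul, abs_of_pos (inv_pos.2 hδ), inv_mul_lt_iff₀ hδ]

lemma DistribMonotone.eventually_N_indicator_one_lt (hX : X.DistribMonotone) (hg : g ∈ X.oc)
    (hg0 : ¬ g =ᵐ[μ] 0) {s : ℕ → Set α} (hs : ∀ n, NullMeasurableSet (s n) μ)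
    (hlim : Tendsto (fun n => μ (s n)) atTop (𝓝 0)) {ε : ℝ} (hε : 0 < ε) :
    ∀ᶠ n in atTop, X.Mem ((s n).indicator fun _ => 1) ∧ X.N ((s n).indicator fun _ => 1) < ε := by
  obtain ⟨t, ht0, ht, htε⟩ := exists_N_indicator_one_lt hg hg0 hε
  filter_upwards [hlim.eventually_le_const ht0] with n hn
  obtain ⟨hmem, hle⟩ := hX.indicator_one (hs n) hn ht
  exact ⟨hmem, hle.trans_lt htε⟩

-- Let `0 ≤ uₙ ≤ |w|` decrease to `0`. Off the set `{η |w| < uₙ}`, whose measure tends to `0`, `uₙ`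
-- is at most `η |w|`; on it `uₙ` is at most a constant multiple of the indicator.
lemma DistribMonotone.mem_oc_of_bounded_of_measure_support_ne_top (hX : X.DistribMonotone)
    (hg : g ∈ X.oc) (hg0 : ¬ g =ᵐ[μ] 0) (hw : X.Mem w) {m : ℝ} (hwm : ∀ x, |w x| ≤ m)
    (hsupp : μ (Function.support w) ≠ ∞) : w ∈ X.oc := by
  refine ⟨hw, fun u hu hu0 _ hlim => tendsto_order.2
    ⟨fun r hr => .of_forall fun n => hr.trans_le (X.N_nonneg _), fun ε hε => ?_⟩⟩
  obtain ⟨η, hη, hηw⟩ := exists_pos_mul_lt (half_pos hε) (X.N w)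
  obtain ⟨δ, hδ, hδm⟩ := exists_pos_mul_lt (half_pos hε) |m|
  set s : ℕ → Set α := fun n => {x | η * |w x| < u n x}
  have hs n : NullMeasurableSet (s n) μ :=
    nullMeasurableSet_lt ((X.measurable w hw).norm.const_mul η) (X.measurable _ (hu n))
  have hs_supp n : s n ≤ᵐ[μ] Function.support w := by
    filter_upwards [hu0 n] with x hx
    refine fun (hxs : η * |w x| < u n x) hwx => hx.2.not_gt ?_
    simpa [hwx] using hxs
  have hs_lim : ∀ᵐ x ∂μ, ∀ᶠ n in atTop, x ∉ s n := by
    filter_upwards [hlim, ae_all_iff.2 hu0] with x hx hux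
    rcases eq_or_ne (w x) 0 with hwx | hwx
    · refine .of_forall fun n (hxs : η * |w x| < u n x) => (hux n).2.not_gt ?_
      simpa [hwx] using hxs
    · exact (hx.eventually_lt_const (by positivity)).mono fun n hn => hn.not_gt
  filter_upwards [hX.eventually_N_indicator_one_lt hg hg0 hs
    (tendsto_measure_zero_of_ae_eventually_notMem hs hs_supp hsupp hs_lim) hδ] with n ⟨hmem, hn⟩
  calc X.N (u n)
      ≤ X.N (η • w) + X.N (m • (s n).indicator fun _ => 1) := by
        refine N_le_add_of_abs_le_or (hu n) (X.mem_smul _ _ hw) (X.mem_smul _ _ hmem) ?_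
        filter_upwards [hu0 n] with x hx
        rw [abs_of_nonneg hx.1]
        by_cases hxs : x ∈ s n
        · exact .inr (by simpa [hxs] using hx.2.trans ((hwm x).trans (le_abs_self m)))
        · exact .inl (by simpa [abs_mul, abs_of_pos hη] using not_lt.1 hxs)
    _ = X.N w * η + |m| * X.N ((s n).indicator fun _ => 1) := by
        rw [X.N_smul, X.N_smul, abs_of_pos hη, mul_comm η]
    _ < ε := by linarith [mul_le_mul_of_nonneg_left hn.le (abs_nonneg m)]

lemma DistribMonotone.truncations_subset_oc (hX : X.DistribMonotone) (hg : g ∈ X.oc)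
    (hg0 : ¬ g =ᵐ[μ] 0) (hf : X.Mem f) : truncations μ f ⊆ X.oc := by
  rintro _ ⟨l, n, hl0, hln, hl, rfl⟩
  exact hX.mem_oc_of_bounded_of_measure_support_ne_top hg hg0 (mem_truncate hf (hl0.trans hln))
    (fun x => (abs_truncate_le (hl0.trans hln) x).trans (min_le_right _ _))
    (measure_ne_top_of_subset support_truncate_subset hl)

end OrderContinuous

section Distance

variable {X : BanachIdealSpace α μ} {f g : α → ℝ}

lemma Symmetric.image_N_sub_truncations_subset (hX : X.Symmetric) (hf : X.Mem f) (hg : X.Mem g)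
    (h : Equimeasurable f g μ μ) :
    (fun w => X.N (f - w)) '' truncations μ f ⊆ (fun w => X.N (g - w)) '' truncations μ g := by
  rintro _ ⟨_, ⟨l, n, hl0, hln, hl, rfl⟩, rfl⟩
  refine ⟨truncate l n g, ⟨l, n, hl0, hln, h.distribFun_eq hl0 ▸ hl, rfl⟩, ?_⟩
  have hfg := h.sub_truncate (X.measurable f hf) (X.measurable g hg) hl0 hln hl
  have hftr := mem_sub hf (mem_truncate hf (l := l) (hl0.trans hln))
  have hgtr := mem_sub hg (mem_truncate hg (l := l) (hl0.trans hln))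
  exact (hX _ _ (X.measurable _ hgtr) hfg.symm hftr).2

lemma Symmetric.distIn_truncations_eq (hX : X.Symmetric) (hf : X.Mem f) (hg : X.Mem g)
    (h : Equimeasurable f g μ μ) :
    distIn X.N f (truncations μ f) = distIn X.N g (truncations μ g) :=
  congrArg sInf <| (hX.image_N_sub_truncations_subset hf hg h).antisymm
    (hX.image_N_sub_truncations_subset hg hf h.symm)

variable [TopologicalSpace α] [SecondCountableTopology α] [T1Space α] [OpensMeasurableSpace α]
  [NullSingletonClass μ] [SigmaFinite μ]

lemma DistribMonotone.distIn_oc_eq_distIn_truncations (hX : X.DistribMonotone) (hg : g ∈ X.oc)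
    (hg0 : ¬ g =ᵐ[μ] 0) (hf : X.Mem f) :
    distIn X.N f X.oc = distIn X.N f (truncations μ f) := by
  have hsub := hX.truncations_subset_oc hg hg0 hf
  apply le_antisymm
  · obtain ⟨w, hw, -⟩ := hX.exists_truncation_N_sub_le hf X.mem_zero (m := 0) (by simp) (by simp)
    exact csInf_le_csInf ⟨0, forall_mem_image.2 fun _ _ => X.N_nonneg _⟩ ⟨_, w, hw, rfl⟩
      (image_mono hsub)
  · refine le_csInf ⟨_, g, hg, rfl⟩ (forall_mem_image.2 fun v hv => ?_)
    refine le_of_forall_pos_le_add fun ε hε => ?_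
    obtain ⟨h, m, hh, hhm, hsupp, hvh⟩ := exists_bounded_N_sub_lt_of_mem_oc hv hε
    obtain ⟨w, hw, hwh⟩ := hX.exists_truncation_N_sub_le hf hh hhm hsupp
    calc distIn X.N f (truncations μ f)
        ≤ X.N (f - w) := distIn_le_of_mem X.N_nonneg hw
      _ ≤ X.N (f - h) := hwh
      _ ≤ X.N (f - v) + X.N (v - h) := N_sub_le hf hv.1 hh
      _ ≤ X.N (f - v) + ε := by gcongr

theorem DistribMonotone.distIn_oc_eq_of_equimeasurable (hX : X.DistribMonotone) (hf : X.Mem f)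
    (hg : X.Mem g) (h : Equimeasurable f g μ μ) : distIn X.N f X.oc = distIn X.N g X.oc := by
  by_cases htriv : ∀ v ∈ X.oc, v =ᵐ[μ] 0
  · rw [distIn_oc_of_forall_ae_eq_zero hf htriv, distIn_oc_of_forall_ae_eq_zero hg htriv]
    exact (hX.symmetric f g (X.measurable f hf) h hg).2
  · push Not at htriv
    obtain ⟨v, hv, hv0⟩ := htriv
    rw [hX.distIn_oc_eq_distIn_truncations hv hv0 hf, hX.distIn_oc_eq_distIn_truncations hv hv0 hg,
      hX.symmetric.distIn_truncations_eq hf hg h]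

end Distance

end BanachIdealSpace

theorem dist_to_oc_eq_dist_rearrangement_general {a : ℝ≥0∞}
    (X : BanachIdealSpace ℝ (volume.restrict (initialInterval a))) (hsymm : X.Symmetric)
    (f : ℝ → ℝ) (hf : X.Mem f) :
    distIn X.N f X.oc = distIn X.N (rear (volume.restrict (initialInterval a)) f) X.oc := by
  have hf' := X.measurable f hf
  have hfin := hsymm.exists_distribFun_ne_top hf
  have hrear := equimeasurable_rear hf' hfin (volume_restrict_initialInterval_univ a).le
  have hrear_mem := (hsymm _ f (aemeasurable_rear hf' hfin a) hrear hf).1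
  exact hsymm.distribMonotone.distIn_oc_eq_of_equimeasurable hf hrear_mem hrear.symm

/-- Let `X` be a rearrangement invariant Banach function space on `(0,1)` or `(0,∞)` with
the Fatou property. Then for every `f ∈ X`, `dist (f, X_a) = dist (f*, X_a)`. -/
theorem dist_to_oc_eq_dist_rearrangement {μ : Measure ℝ}
    (hμ : μ = volume.restrict (Set.Ioo (0 : ℝ) 1) ∨ μ = volume.restrict (Set.Ioi (0 : ℝ)))
    (X : BanachIdealSpace ℝ μ) (hsymm : X.Symmetric) (hFatou : X.Fatou)
    (f : ℝ → ℝ) (hf : X.Mem f) :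
    distIn X.N f X.oc = distIn X.N (rear μ f) X.oc := by
  obtain ⟨a, rfl⟩ : ∃ a, μ = volume.restrict (initialInterval a) := by
    rcases hμ with rfl | rfl
    exacts [⟨1, by rw [initialInterval_one]⟩, ⟨∞, by rw [initialInterval_top]⟩]
  exact dist_to_oc_eq_dist_rearrangement_general X hsymm f hf
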